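/- arXiv:1210.3397 — 3 statements merged into one kernel-verified Lean document; each statement's English description precedes it below -/
import Mathlib

section
/- Let f0 = sup_{k≥0} 2^{k−2^k} χ_{[0,2^{2^k})} and a(t,f0) = (1/log(1+t)) ∫_0^t f0(s) ds. There exists a function r : (2,∞) → ℝ with r(t) → 0 as t → ∞ such that for every integer n ≥ 1 and every t with 2^{2^n} ≤ t < 2^{2^{n+1}}, one has a(t,f0) = 2^{n+1}/log t + t·f0(t)/log(1+t) + r(t). -/
open MeasureTheory Filter Set

/-- `f0 = sup_{k ≥ 0} 2^(k - 2^k) χ_[0, 2^(2^k))`. -/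
noncomputable def f0 : ℝ → ℝ := fun t =>
  ⨆ k : ℕ, if t < (2:ℝ) ^ (2 ^ k) then (2:ℝ) ^ ((k : ℤ) - 2 ^ k) else 0

lemma g_succ_le (k : ℕ) : (2:ℝ) ^ (((k+1 : ℕ) : ℤ) - 2 ^ (k+1)) ≤ (2:ℝ) ^ ((k : ℤ) - 2 ^ k) := by
  apply zpow_le_zpow_right₀ (by norm_num)
  have : (1:ℤ) ≤ 2 ^ k := one_le_pow₀ (by norm_num)
  push_cast
  rw [pow_succ]
  linarith

lemma g_anti : Antitone (fun k : ℕ => (2:ℝ) ^ ((k : ℤ) - 2 ^ k)) :=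
  antitone_nat_of_succ_le g_succ_le

lemma f0_bdd (t : ℝ) : BddAbove (range fun k : ℕ =>
    if t < (2:ℝ) ^ (2 ^ k) then (2:ℝ) ^ ((k : ℤ) - 2 ^ k) else 0) := by
  refine ⟨(2:ℝ) ^ (((0:ℕ) : ℤ) - 2 ^ 0), ?_⟩
  rintro _ ⟨k, rfl⟩
  dsimp only
  split_ifs
  · exact g_anti (Nat.zero_le k)
  · positivity

lemma f0_anti : Antitone f0 := by
  intro s t hst
  apply ciSup_mono (f0_bdd s)
  intro k
  split_ifs with h1 h2
  · exact le_rfl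
  · exact absurd (hst.trans_lt h1) h2
  · positivity
  · exact le_rfl

lemma f0_low (t : ℝ) (h : t < 2) : f0 t = 1 / 2 := by
  apply le_antisymm
  · apply ciSup_le
    intro k
    split_ifs
    · refine (g_anti (Nat.zero_le k)).trans ?_
      norm_num
    · norm_num
  · refine le_trans ?_ (le_ciSup (f0_bdd t) 0)
    simp [h]

lemma f0_eq (n : ℕ) (t : ℝ) (h1 : (2:ℝ) ^ (2 ^ n) ≤ t) (h2 : t < (2:ℝ) ^ (2 ^ (n + 1))) :
    f0 t = 2 ^ (n+1) / ((2:ℝ) ^ (2 ^ n)) ^ 2 := by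
  have e : (2:ℝ) ^ (((n+1 : ℕ) : ℤ) - 2 ^ (n+1)) = 2 ^ (n+1) / ((2:ℝ) ^ (2 ^ n)) ^ 2 := by
    rw [zpow_sub₀ (by norm_num), zpow_natCast, ← pow_mul, ← pow_succ]
    congr 1
  rw [← e]
  apply le_antisymm
  · apply ciSup_le
    intro k
    split_ifs with h
    · apply g_anti
      by_contra hk
      have : k ≤ n := by omega
      have : (2:ℝ) ^ (2 ^ k) ≤ (2:ℝ) ^ (2 ^ n) :=
        pow_le_pow_right₀ (by norm_num) (Nat.pow_le_pow_right (by norm_num) this)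
      linarith
    · positivity
  · refine le_trans ?_ (le_ciSup (f0_bdd t) (n+1))
    rw [if_pos h2]

lemma f0_int (a b : ℝ) : IntervalIntegrable f0 volume a b := f0_anti.intervalIntegrable

lemma int_const (a b c : ℝ) (hab : a ≤ b) (h : ∀ s, a ≤ s → s < b → f0 s = c) :
    ∫ s in a..b, f0 s = (b - a) * c := by
  have : ∫ s in a..b, f0 s = ∫ s in a..b, c := by
    rw [intervalIntegral.integral_of_le hab, intervalIntegral.integral_of_le hab,
      integral_Ioc_eq_integral_Ioo, integral_Ioc_eq_integral_Ioo]
    exact setIntegral_congr_fun measurableSet_Ioo fun s hs => h s hs.1.le hs.2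
  rw [this]; simp

lemma P_ge (n : ℕ) : ((2:ℝ) ^ n) ^ 2 ≤ (2:ℝ) ^ (2 ^ n) := by
  rw [← pow_mul]
  apply pow_le_pow_right₀ (by norm_num)
  induction n with
  | zero => simp
  | succ k ih =>
    have := Nat.one_le_two_pow (n := k)
    rcases Nat.eq_zero_or_pos k with h | h
    · subst h; simp
    · rw [pow_succ]; omega

lemma q_le (n : ℕ) : (2:ℝ) ^ (n+1) / (2:ℝ) ^ (2 ^ n) ≤ 2 / 2 ^ n := by
  rw [div_le_div_iff₀ (by positivity) (by positivity)]
  have := P_ge n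
  rw [pow_succ]; nlinarith

lemma I_bound (n : ℕ) : (2:ℝ) ^ (n+1) - (5 - 4 / 2 ^ n) ≤ ∫ s in (0:ℝ)..(2:ℝ) ^ (2 ^ n), f0 s ∧
    ∫ s in (0:ℝ)..(2:ℝ) ^ (2 ^ n), f0 s ≤ (2:ℝ) ^ (n+1) := by
  induction n with
  | zero =>
    rw [int_const 0 _ (1/2) (by positivity) fun s _ h => f0_low s (by simpa using h)]
    norm_num
  | succ n ih =>
    rw [← intervalIntegral.integral_add_adjacent_intervals (f0_int 0 ((2:ℝ) ^ (2 ^ n)))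
      (f0_int _ _), int_const _ _ _ (pow_le_pow_right₀ (by norm_num)
        (Nat.pow_le_pow_right (by norm_num) (Nat.le_succ n))) (f0_eq n)]
    have hP : (0:ℝ) < (2:ℝ) ^ (2 ^ n) := by positivity
    have e : ((2:ℝ) ^ (2 ^ (n+1)) - (2:ℝ) ^ (2 ^ n)) * (2 ^ (n+1) / ((2:ℝ) ^ (2 ^ n)) ^ 2)
        = 2 ^ (n+1) - 2 ^ (n+1) / (2:ℝ) ^ (2 ^ n) := by
      rw [pow_succ 2 n, pow_mul (2:ℝ) (2^n) 2]
      field_simp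
    rw [e]
    have q0 : 0 ≤ (2:ℝ) ^ (n+1) / (2:ℝ) ^ (2 ^ n) := by positivity
    have q := q_le n
    have e2 : (4:ℝ) / 2 ^ (n+1) = 2 / 2 ^ n := by rw [pow_succ]; field_simp; norm_num
    have e3 : (4:ℝ) / 2 ^ n = 2 * (2 / 2 ^ n) := by ring
    rw [e2, pow_succ 2 (n+1)]
    rw [e3] at ih
    constructor <;> linarith [ih.1, ih.2]

lemma main_bound (n : ℕ) (hn : 1 ≤ n) (t : ℝ) (h1 : (2:ℝ) ^ (2 ^ n) ≤ t)
    (h2 : t < (2:ℝ) ^ (2 ^ (n + 1))) :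
    |(∫ s in (0:ℝ)..t, f0 s) / Real.log (1 + t)
          - 2 ^ (n + 1) / Real.log t - t * f0 t / Real.log (1 + t)| ≤ 8 / Real.log t := by
  have hP : (0:ℝ) < (2:ℝ) ^ (2 ^ n) := by positivity
  have h4 : (4:ℝ) ≤ (2:ℝ) ^ (2 ^ n) := by
    calc (4:ℝ) = 2 ^ (2 ^ 1) := by norm_num
      _ ≤ _ := pow_le_pow_right₀ (by norm_num) (Nat.pow_le_pow_right (by norm_num) hn)
  have hNP : (2:ℝ) ^ (n+1) ≤ t := by
    refine le_trans ?_ h1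
    have := P_ge n
    have h : (2:ℝ) ≤ 2 ^ n := le_self_pow₀ (by norm_num) (by omega)
    rw [pow_succ]; nlinarith
  have ht : 4 ≤ t := h4.trans h1
  have hl1 : 1 ≤ Real.log t := by
    rw [Real.le_log_iff_exp_le (by linarith)]
    linarith [Real.exp_one_lt_d9]
  have hl2 : Real.log t ≤ Real.log (1 + t) := Real.log_le_log (by linarith) (by linarith)
  have hd : t * (Real.log (1+t) - Real.log t) ≤ 1 := by
    rw [← Real.log_div (by linarith) (by linarith)]
    have := Real.log_le_sub_one_of_pos (x := (1+t)/t) (by positivity)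
    have e : (1+t)/t - 1 = 1 / t := by field_simp; ring
    rw [e] at this
    calc _ ≤ t * (1/t) := by gcongr
      _ = 1 := by field_simp
  have hI : ∫ s in (0:ℝ)..t, f0 s = (∫ s in (0:ℝ)..(2:ℝ) ^ (2 ^ n), f0 s) + t * f0 t
      - 2 ^ (n+1) / (2:ℝ) ^ (2 ^ n) := by
    rw [← intervalIntegral.integral_add_adjacent_intervals (f0_int 0 ((2:ℝ) ^ (2 ^ n)))
      (f0_int _ t), int_const _ t _ h1 fun s a b => f0_eq n s a (b.trans h2), f0_eq n t h1 h2]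
    field_simp
    ring
  have hb := I_bound n
  have q0 : 0 ≤ (2:ℝ) ^ (n+1) / (2:ℝ) ^ (2 ^ n) := by positivity
  have q := q_le n
  have q2 : (2:ℝ) / 2 ^ n ≤ 2 := div_le_self (by norm_num) (one_le_pow₀ (by norm_num))
  have q3 : (0:ℝ) ≤ 4 / 2 ^ n := by positivity
  rw [hI]
  generalize (∫ s in (0:ℝ)..(2:ℝ) ^ (2 ^ n), f0 s) = I at *
  generalize (2:ℝ) ^ (n+1) / (2:ℝ) ^ (2 ^ n) = Q at *
  have hN0 : (0:ℝ) < 2 ^ (n+1) := by positivity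
  generalize (2:ℝ) ^ (n+1) = N at *
  generalize Real.log (1+t) = L at *
  generalize Real.log t = l at *
  have e : (I + t * f0 t - Q) / L - N / l - t * f0 t / L = ((I - Q - N) - N * (L - l) / l) / L := by
    have : L ≠ 0 := by linarith
    have : l ≠ 0 := by linarith
    field_simp
    ring
  rw [e, abs_div, abs_of_pos (by linarith : 0 < L)]
  have h5 : N * (L - l) ≤ 1 := le_trans (mul_le_mul_of_nonneg_right hNP (by linarith)) hd
  have h6 : 0 ≤ N * (L - l) := mul_nonneg hN0.le (by linarith)
  have h7 : N * (L - l) / l ≤ 1 := by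
    rw [div_le_one (by linarith)]; linarith
  have h8 : 0 ≤ N * (L - l) / l := div_nonneg h6 (by linarith)
  apply div_le_div₀ (by norm_num) _ (by linarith) hl2
  rw [abs_le]
  constructor <;> linarith [hb.1, hb.2]

/-- There is `r(t) → 0` such that for all `n ≥ 1` and `2^(2^n) ≤ t < 2^(2^(n+1))`,
`a(t, f0) = 2^(n+1)/log t + t f0(t)/log(1+t) + r(t)`. -/
theorem avA_f0_asymptotics :
    ∃ r : ℝ → ℝ, Filter.Tendsto r Filter.atTop (nhds 0) ∧
      ∀ n : ℕ, 1 ≤ n → ∀ t : ℝ, (2:ℝ) ^ (2 ^ n) ≤ t → t < (2:ℝ) ^ (2 ^ (n + 1)) →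
        (∫ s in (0:ℝ)..t, f0 s) / Real.log (1 + t)
          = 2 ^ (n + 1) / Real.log t + t * f0 t / Real.log (1 + t) + r t := by
  classical
  have hex : ∀ t : ℝ, ∃ n : ℕ, t < (2:ℝ) ^ (2 ^ (n + 1)) := by
    intro t
    obtain ⟨n, hn⟩ := pow_unbounded_of_one_lt t (by norm_num : (1:ℝ) < 2)
    refine ⟨n, hn.trans_le (pow_le_pow_right₀ (by norm_num) ?_)⟩
    exact (Nat.lt_two_pow_self (n := n)).le.trans (Nat.pow_le_pow_right (by norm_num) (by omega))
  refine ⟨fun t => (∫ s in (0:ℝ)..t, f0 s) / Real.log (1 + t)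
          - 2 ^ (Nat.find (hex t) + 1) / Real.log t - t * f0 t / Real.log (1 + t), ?_, ?_⟩
  · have hlim : Tendsto (fun t => 8 / Real.log t) atTop (nhds 0) :=
      Real.tendsto_log_atTop.const_div_atTop 8
    refine squeeze_zero_norm' ?_ hlim
    filter_upwards [eventually_ge_atTop (4:ℝ)] with t ht
    have hs := Nat.find_spec (hex t)
    have hpos : 1 ≤ Nat.find (hex t) := by
      by_contra h
      have h0 : Nat.find (hex t) = 0 := by omega
      rw [h0] at hs
      norm_num at hs
      linarith
    have hm := Nat.find_min (hex t) (m := Nat.find (hex t) - 1) (by omega)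
    rw [Nat.sub_add_cancel hpos, not_lt] at hm
    exact main_bound _ hpos t hm hs
  · intro n hn t h1 h2
    have : Nat.find (hex t) = n := by
      rw [Nat.find_eq_iff]
      refine ⟨h2, fun m hm => not_lt.2 (le_trans ?_ h1)⟩
      exact pow_le_pow_right₀ (by norm_num) (Nat.pow_le_pow_right (by norm_num) hm)
    dsimp only
    rw [this]
    ring
end

section
/- Define x : [1,∞) → ℝ by x(t) = 2^{n−√(log₂ t)} for t ∈ [2^{n²}, 2^{(n+1)²}) with n ≥ 0 an integer (so x(t) = 2^{n−√(log₂ t)} whenever n ≤ √(log₂ t) < n+1). Then lim_{t→∞} (Mx)(t) = 1/(2·log 2), where (Mx)(t) = (1/log t) ∫_1^t x(s) ds/s for t > 1. -/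
open MeasureTheory Filter Set

/-- The logarithmic Cesàro mean `(Mg)(t) = (1/log t) ∫_1^t g(s) ds/s`. -/
noncomputable def Mop (g : ℝ → ℝ) (t : ℝ) : ℝ := (∫ s in (1:ℝ)..t, g s / s) / Real.log t

/-- `x(t) = 2^(n - √(log₂ t))` for `t ∈ [2^(n²), 2^((n+1)²))`, i.e.
`x(t) = 2^(⌊√(log₂ t)⌋ - √(log₂ t))` for `t ≥ 1`. -/
noncomputable def x1 : ℝ → ℝ := fun t =>
  if 1 ≤ t then
    (2:ℝ) ^ ((Nat.floor (Real.sqrt (Real.logb 2 t)) : ℝ) - Real.sqrt (Real.logb 2 t))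
  else 0

noncomputable def ux (s : ℝ) : ℝ := Real.sqrt (Real.logb 2 s)

noncomputable def Ax (n : ℕ) (s : ℝ) : ℝ := -2 * (2:ℝ) ^ ((n:ℝ) - ux s) * (ux s + 1 / Real.log 2)

lemma ux_continuousOn : ContinuousOn ux (Ioi 0) := by
  unfold ux
  refine Real.continuous_sqrt.comp_continuousOn ?_
  unfold Real.logb
  refine ContinuousOn.div_const (Real.continuousOn_log.mono ?_) _
  intro s hs
  have : (0:ℝ) < s := hs
  simp [this.ne']

lemma ux_pow (n : ℕ) : ux ((2:ℝ) ^ (n^2)) = n := by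
  unfold ux
  rw [Real.logb_pow, Real.logb_self_eq_one (by norm_num)]
  push_cast
  rw [mul_one, Real.sqrt_sq (by positivity)]

lemma ux_hasDeriv {s : ℝ} (hs : 1 < s) : HasDerivAt ux (1 / (2 * ux s * (s * Real.log 2))) s := by
  have h1 : HasDerivAt (fun s => Real.logb 2 s) (s⁻¹ / Real.log 2) s :=
    (Real.hasDerivAt_log (by linarith)).div_const _
  have hp : 0 < Real.logb 2 s := Real.logb_pos (by norm_num) hs
  have h2 := h1.sqrt hp.ne'
  have hu : 0 < Real.sqrt (Real.logb 2 s) := Real.sqrt_pos.2 hp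
  have hL := Real.log_pos (show (1:ℝ) < 2 by norm_num)
  refine HasDerivAt.congr_deriv (f := ux) h2 ?_
  unfold ux
  field_simp

lemma Ax_hasDeriv (n : ℕ) {s : ℝ} (hs : 1 < s) :
    HasDerivAt (Ax n) ((2:ℝ) ^ ((n:ℝ) - ux s) / s) s := by
  have hp : 0 < Real.logb 2 s := Real.logb_pos (by norm_num) hs
  have hu : 0 < ux s := Real.sqrt_pos.2 hp
  have hL := Real.log_pos (show (1:ℝ) < 2 by norm_num)
  have h := ux_hasDeriv hs
  have h1 := ((h.const_sub (n:ℝ)).const_rpow (a := 2) (by norm_num))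
  have h2 := (h1.const_mul (-2)).mul (h.add_const (1 / Real.log 2))
  refine HasDerivAt.congr_deriv (f := Ax n) h2 ?_
  have : 0 < s := by linarith
  field_simp
  ring

lemma x1_eq (n : ℕ) {s : ℝ} (h1 : (2:ℝ) ^ (n^2) ≤ s) (h2 : s < (2:ℝ) ^ ((n+1)^2)) :
    (n:ℝ) ≤ ux s ∧ ux s < n + 1 ∧ x1 s = (2:ℝ) ^ ((n:ℝ) - ux s) := by
  have hs1 : 1 ≤ s := le_trans (one_le_pow₀ (by norm_num)) h1
  have hs : 0 < s := by linarith
  have a : (n:ℝ) ≤ ux s := by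
    rw [← ux_pow n]; unfold ux
    exact Real.sqrt_le_sqrt (Real.logb_le_logb_of_le (by norm_num) (by positivity) h1)
  have b : ux s < n + 1 := by
    have := ux_pow (n+1)
    push_cast at this
    rw [← this]; unfold ux
    exact Real.sqrt_lt_sqrt (Real.logb_nonneg (by norm_num) hs1)
      (Real.logb_lt_logb (by norm_num) hs h2)
  refine ⟨a, b, ?_⟩
  have hf : Nat.floor (ux s) = n := by
    rw [Nat.floor_eq_iff (by unfold ux; positivity)]; exact ⟨a, b⟩
  unfold x1
  rw [if_pos hs1]
  change (2:ℝ) ^ ((Nat.floor (ux s) : ℝ) - ux s) = _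
  rw [hf]

lemma piece (n : ℕ) {t : ℝ} (h1 : (2:ℝ) ^ (n^2) ≤ t) (h2 : t ≤ (2:ℝ) ^ ((n+1)^2)) :
    IntervalIntegrable (fun s => x1 s / s) volume ((2:ℝ) ^ (n^2)) t ∧
    ∫ s in ((2:ℝ) ^ (n^2))..t, x1 s / s = Ax n t - Ax n ((2:ℝ) ^ (n^2)) := by
  have h0 : (1:ℝ) ≤ 2 ^ (n^2) := one_le_pow₀ (by norm_num)
  have hsub : Icc ((2:ℝ) ^ (n^2)) t ⊆ Ioi 0 := fun s hs => by
    have := hs.1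
    simp only [mem_Ioi]; linarith
  have hu := ux_continuousOn.mono hsub
  have hpow : ContinuousOn (fun s => (2:ℝ) ^ ((n:ℝ) - ux s)) (Icc ((2:ℝ) ^ (n^2)) t) :=
    ContinuousOn.rpow continuousOn_const (continuousOn_const.sub hu)
      (fun _ _ => Or.inl (by norm_num))
  have hc : ContinuousOn (fun s => (2:ℝ) ^ ((n:ℝ) - ux s) / s) (Icc ((2:ℝ) ^ (n^2)) t) :=
    hpow.div continuousOn_id (fun s hs => (hsub hs).ne')
  have hA : ContinuousOn (Ax n) (Icc ((2:ℝ) ^ (n^2)) t) :=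
    (continuousOn_const.mul hpow).mul (hu.add continuousOn_const)
  have hi : IntervalIntegrable (fun s => (2:ℝ) ^ ((n:ℝ) - ux s) / s) volume ((2:ℝ) ^ (n^2)) t :=
    hc.intervalIntegrable_of_Icc h1
  have hae : (fun s => (2:ℝ) ^ ((n:ℝ) - ux s) / s) =ᵐ[volume.restrict (uIoc ((2:ℝ) ^ (n^2)) t)]
      (fun s => x1 s / s) := by
    rw [uIoc_of_le h1, ← restrict_Ioo_eq_restrict_Ioc]
    filter_upwards [ae_restrict_mem measurableSet_Ioo] with s hs
    rw [(x1_eq n hs.1.le (lt_of_lt_of_le hs.2 h2)).2.2]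
  refine ⟨hi.congr_ae hae, ?_⟩
  rw [← intervalIntegral.integral_congr_ae_restrict hae]
  exact intervalIntegral.integral_eq_sub_of_hasDerivAt_of_le h1 hA
    (fun s hs => Ax_hasDeriv n (lt_of_le_of_lt h0 hs.1)) hi

lemma full (n : ℕ) :
    IntervalIntegrable (fun s => x1 s / s) volume 1 ((2:ℝ) ^ (n^2)) ∧
    ∫ s in (1:ℝ)..((2:ℝ) ^ (n^2)), x1 s / s = (n:ℝ)^2 / 2 + n * (1 / Real.log 2 - 3 / 2) := by
  induction n with
  | zero => simp
  | succ n ih =>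
    have hp := piece n (t := (2:ℝ) ^ ((n+1)^2))
      (pow_le_pow_right₀ (by norm_num) (by gcongr; omega)) le_rfl
    refine ⟨ih.1.trans hp.1, ?_⟩
    rw [← intervalIntegral.integral_add_adjacent_intervals ih.1 hp.1, ih.2, hp.2]
    unfold Ax
    rw [ux_pow, ux_pow]
    have : (n:ℝ) - ((n+1 : ℕ):ℝ) = -1 := by push_cast; ring
    rw [this, sub_self, Real.rpow_zero, Real.rpow_neg_one]
    push_cast
    ring

lemma bound_all {t : ℝ} (ht : 1 ≤ t) :
    |(∫ s in (1:ℝ)..t, x1 s / s) - (ux t)^2 / 2| ≤ 7 * ux t + 5 / Real.log 2 * (ux t + 1) + 1 := by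
  have hL := Real.log_pos (show (1:ℝ) < 2 by norm_num)
  have hl : 0 ≤ Real.logb 2 t := Real.logb_nonneg (by norm_num) ht
  set n := Nat.floor (ux t) with hn
  have hu0 : 0 ≤ ux t := Real.sqrt_nonneg _
  have hsq : ux t ^ 2 = Real.logb 2 t := Real.sq_sqrt hl
  have a : (n:ℝ) ≤ ux t := Nat.floor_le hu0
  have b : ux t < n + 1 := Nat.lt_floor_add_one _
  have ht2 : t = (2:ℝ) ^ (ux t ^ 2) := by
    rw [hsq, Real.rpow_logb (by norm_num) (by norm_num) (by linarith)]
  have h1 : (2:ℝ) ^ (n^2) ≤ t := by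
    rw [ht2, ← Real.rpow_natCast 2]
    apply Real.rpow_le_rpow_of_exponent_le (by norm_num)
    push_cast
    gcongr
  have h2 : t ≤ (2:ℝ) ^ ((n+1)^2) := by
    rw [ht2, ← Real.rpow_natCast 2]
    apply Real.rpow_le_rpow_of_exponent_le (by norm_num)
    push_cast
    gcongr
  have hp := piece n h1 h2
  have hf := full n
  rw [← intervalIntegral.integral_add_adjacent_intervals hf.1 hp.1, hf.2, hp.2]
  unfold Ax
  rw [ux_pow, sub_self, Real.rpow_zero]
  have hw0 : 0 < (2:ℝ) ^ ((n:ℝ) - ux t) := by positivity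
  have hw1 : (2:ℝ) ^ ((n:ℝ) - ux t) ≤ 1 :=
    Real.rpow_le_one_of_one_le_of_nonpos (by norm_num) (by linarith)
  generalize (2:ℝ) ^ ((n:ℝ) - ux t) = w at *
  have hq : 0 < 1 / Real.log 2 := by positivity
  rw [show 5 / Real.log 2 = 5 * (1 / Real.log 2) by ring]
  generalize 1 / Real.log 2 = q at *
  generalize ux t = u at *
  have hn0 : (0:ℝ) ≤ n := Nat.cast_nonneg n
  generalize (n:ℝ) = m at *
  have e1 : w * (u + q) ≤ u + q := by nlinarith
  have e2 : 0 ≤ w * (u + q) := by positivity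
  have e3 : m * q ≤ u * q := by gcongr
  have e4 : 0 ≤ m * q := by positivity
  rw [abs_le]
  constructor <;> nlinarith

theorem Mop_x1_tendsto :
    Filter.Tendsto (Mop x1) Filter.atTop (nhds (1 / (2 * Real.log 2))) := by
  have hL := Real.log_pos (show (1:ℝ) < 2 by norm_num)
  have hu : Tendsto ux atTop atTop :=
    Real.tendsto_sqrt_atTop.comp (Real.tendsto_logb_atTop (by norm_num))
  have hi := tendsto_inv_atTop_zero.comp hu
  rw [tendsto_iff_norm_sub_tendsto_zero]
  have hlim : Tendsto (fun t => (7 * (ux t)⁻¹ + 5 / Real.log 2 * ((ux t)⁻¹ + (ux t)⁻¹ ^ 2)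
      + (ux t)⁻¹ ^ 2) / Real.log 2) atTop (nhds 0) := by
    have := (((hi.const_mul 7).add ((hi.add (hi.pow 2)).const_mul (5 / Real.log 2))).add
      (hi.pow 2)).div_const (Real.log 2)
    simpa using this
  refine squeeze_zero' (Eventually.of_forall fun t => norm_nonneg _) ?_ hlim
  filter_upwards [eventually_gt_atTop 1] with t ht
  have hp : 0 < Real.logb 2 t := Real.logb_pos (by norm_num) ht
  have hu : 0 < ux t := Real.sqrt_pos.2 hp
  have hlog : Real.log t = ux t ^ 2 * Real.log 2 := by
    unfold ux
    rw [Real.sq_sqrt hp.le, Real.logb, div_mul_cancel₀ _ hL.ne']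
  have hb := bound_all ht.le
  unfold Mop
  rw [hlog, Real.norm_eq_abs]
  generalize (∫ s in (1:ℝ)..t, x1 s / s) = I at *
  have e : I / (ux t ^ 2 * Real.log 2) - 1 / (2 * Real.log 2)
      = (I - ux t ^ 2 / 2) / (ux t ^ 2 * Real.log 2) := by field_simp
  rw [e, abs_div, abs_of_pos (by positivity : 0 < ux t ^ 2 * Real.log 2),
    div_le_iff₀ (by positivity)]
  refine hb.trans (le_of_eq ?_)
  field_simp
end

section
/- Define ψ(t) = 2^{√(log₂(1+t))} − 1, g0 = sup_{k≥0} 2^{k−k²} χ_{[0,2^{k²})}, and a(t,g0) = (1/ψ(t)) ∫_0^t g0(s) ds. Then lim_{t→∞} (M a(·,g0))(t) = 1/log 2, where (Mg)(t) = (1/log t) ∫_1^t g(s) ds/s for t > 1. Consequently, ω(a(·,g0)) = 1/log 2 for every generalized limit ω on the bounded measurable functions on (0,∞) of the form ω = γ ∘ M with γ a generalized limit. -/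
open MeasureTheory Filter Set

/-- `avA ψ f t = (1/ψ(t)) ∫_0^t f(s) ds`. -/
noncomputable def avA (ψ f : ℝ → ℝ) (t : ℝ) : ℝ := (∫ s in (0:ℝ)..t, f s) / ψ t

/-- A function is bounded on `(0, ∞)`. -/
def BddPos (x : ℝ → ℝ) : Prop := ∃ C : ℝ, ∀ t > (0:ℝ), |x t| ≤ C

/-- A generalized limit (at infinity) on the bounded measurable functions on `(0, ∞)`:
a linear functional sandwiched between `liminf` and `limsup` at infinity. -/
def IsGenLim (ω : (ℝ → ℝ) → ℝ) : Prop :=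
  (∀ x y : ℝ → ℝ, Measurable x → BddPos x → Measurable y → BddPos y →
    ω (x + y) = ω x + ω y) ∧
  (∀ (c : ℝ) (x : ℝ → ℝ), Measurable x → BddPos x → ω (c • x) = c * ω x) ∧
  (∀ x : ℝ → ℝ, Measurable x → BddPos x →
    Filter.liminf x Filter.atTop ≤ ω x ∧ ω x ≤ Filter.limsup x Filter.atTop)

/-- Dilation invariance: `ω (σ_s x) = ω x` where `(σ_s x)(t) = x(t/s)`. -/
def DilInv (ω : (ℝ → ℝ) → ℝ) : Prop :=
  ∀ s > (0:ℝ), ∀ x : ℝ → ℝ, Measurable x → BddPos x →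
    ω (fun t => x (t / s)) = ω x

/-- The class `Ω`: nonnegative concave functions on `[0, ∞)` with `ψ(0+) = 0`
and `ψ(∞) = ∞`. -/
def InOmegaClass (ψ : ℝ → ℝ) : Prop :=
  ConcaveOn ℝ (Set.Ici 0) ψ ∧ (∀ t, 0 ≤ t → 0 ≤ ψ t) ∧
  Filter.Tendsto ψ (nhdsWithin 0 (Set.Ioi 0)) (nhds 0) ∧
  Filter.Tendsto ψ Filter.atTop Filter.atTop

/-- `ψ(t) = 2^√(log₂(1+t)) - 1`. -/
noncomputable def psi0 : ℝ → ℝ := fun t => (2:ℝ) ^ Real.sqrt (Real.logb 2 (1 + t)) - 1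

/-- `g0 = sup_{k ≥ 0} 2^(k - k²) χ_[0, 2^(k²))`. -/
noncomputable def g0 : ℝ → ℝ := fun t =>
  ⨆ k : ℕ, if t < (2:ℝ) ^ (k ^ 2) then (2:ℝ) ^ ((k : ℤ) - (k : ℤ) ^ 2) else 0

/-- `a(t, g0) = (1/ψ(t)) ∫_0^t g0(s) ds`. -/
noncomputable def aG : ℝ → ℝ := fun t => (∫ s in (0:ℝ)..t, g0 s) / psi0 t

/-- The logarithmic Cesàro mean, `(Mg)(t) = (1/log t) ∫_1^t g(s) ds/s` for `t > 1`
and `0` otherwise. -/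
noncomputable def MopO (g : ℝ → ℝ) : ℝ → ℝ := fun t =>
  if 1 < t then (∫ s in (1:ℝ)..t, g s / s) / Real.log t else 0

lemma z_g0_bdd (t : ℝ) : BddAbove (range fun k : ℕ => if t < (2:ℝ) ^ (k ^ 2) then (2:ℝ) ^ ((k : ℤ) - (k : ℤ) ^ 2) else 0) := by
  refine ⟨1, ?_⟩
  rintro _ ⟨k, rfl⟩
  dsimp only
  split_ifs
  · apply zpow_le_one_of_nonpos₀ (by norm_num)
    rcases k with _ | k
    · simp
    · push_cast; nlinarith [Int.natCast_nonneg k]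
  · norm_num

lemma z_g0_anti : Antitone g0 := by
  intro s t h
  unfold g0
  apply ciSup_mono (z_g0_bdd s)
  intro k
  split_ifs with h1 h2 h2
  · rfl
  · exact absurd (h.trans_lt h1) h2
  · positivity
  · rfl

lemma z_g0_nonneg (t : ℝ) : 0 ≤ g0 t := by
  unfold g0
  apply Real.iSup_nonneg
  intro k
  split_ifs <;> positivity

lemma z_g0_int (a b : ℝ) : IntervalIntegrable g0 volume a b := z_g0_anti.intervalIntegrable

lemma z_g0_one (t : ℝ) (h : t < 2) : g0 t = 1 := by
  apply le_antisymm
  · unfold g0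
    apply ciSup_le
    intro k
    split_ifs
    · apply zpow_le_one_of_nonpos₀ (by norm_num)
      rcases k with _ | k
      · simp
      · push_cast; nlinarith [Int.natCast_nonneg k]
    · norm_num
  · have := le_ciSup (z_g0_bdd t) 1
    simpa [g0, h] using this

lemma z_g0_eq (n : ℕ) (t : ℝ) (h1 : (2:ℝ)^(n^2) ≤ t) (h2 : t < (2:ℝ)^((n+1)^2)) :
    g0 t = 2^(n+1) / 2^((n+1)^2) := by
  have e : (2:ℝ) ^ (((n+1:ℕ) : ℤ) - ((n+1:ℕ) : ℤ) ^ 2) = 2^(n+1) / 2^((n+1)^2) := by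
    rw [zpow_sub₀ (by norm_num), zpow_natCast]
    congr 1
  rw [← e]
  apply le_antisymm
  · unfold g0
    apply ciSup_le
    intro k
    split_ifs with h
    · apply zpow_le_zpow_right₀ (by norm_num)
      have hk : n + 1 ≤ k := by
        by_contra hc
        have : k ^ 2 ≤ n ^ 2 := Nat.pow_le_pow_left (by omega) 2
        have := pow_le_pow_right₀ (by norm_num : (1:ℝ) ≤ 2) this
        linarith
      obtain ⟨j, rfl⟩ := Nat.exists_eq_add_of_le hk
      push_cast
      nlinarith [Int.natCast_nonneg j, Int.natCast_nonneg n, mul_nonneg (Int.natCast_nonneg j) (Int.natCast_nonneg n)]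
    · positivity
  · have := le_ciSup (z_g0_bdd t) (n+1)
    rw [if_pos h2] at this
    exact this

noncomputable def zG (t : ℝ) : ℝ := ∫ s in (0:ℝ)..t, g0 s

lemma z_G_step (n : ℕ) (t : ℝ) (h1 : (2:ℝ)^(n^2) ≤ t) (h2 : t ≤ (2:ℝ)^((n+1)^2)) :
    zG t = zG (2^(n^2)) + (t - 2^(n^2)) * (2^(n+1) / 2^((n+1)^2)) := by
  unfold zG
  rw [← intervalIntegral.integral_add_adjacent_intervals (z_g0_int 0 (2^(n^2))) (z_g0_int _ t)]
  congr 1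
  rw [intervalIntegral.integral_congr_Ioo_of_le (g := fun _ => (2:ℝ)^(n+1) / 2^((n+1)^2)) h1]
  · simp [mul_div_assoc]
  · intro s hs
    exact z_g0_eq n s hs.1.le (hs.2.trans_le h2)

lemma z_G_val (n : ℕ) : zG (2^((n+1)^2)) = 2^(n+2) - 3 + 2 / 2^(n+1) := by
  induction n with
  | zero =>
    unfold zG
    rw [intervalIntegral.integral_congr_Ioo_of_le (g := fun _ => (1:ℝ)) (by positivity)]
    · simp; norm_num
    · intro s hs
      exact z_g0_one s (by simpa using hs.2)
  | succ n ih =>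
    have h : (2:ℝ)^((n+1)^2) ≤ 2^((n+1+1)^2) := pow_le_pow_right₀ (by norm_num) (by gcongr; omega)
    rw [z_G_step (n+1) _ h le_rfl, ih]
    have e : (2:ℝ)^((n+1+1)^2) = 2^((n+1)^2) * (2^(n+1) * 2^(n+1)) * 2 := by
      rw [← pow_add, ← pow_add, ← pow_succ]; congr 1; ring
    rw [e]
    have : (0:ℝ) < 2^((n+1)^2) := by positivity
    have : (0:ℝ) < 2^n := by positivity
    generalize (2:ℝ)^((n+1)^2) = X at *
    simp only [pow_succ]
    generalize (2:ℝ)^n = Y at *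
    field_simp
    ring

lemma z_G_bounds (n : ℕ) (hn : 1 ≤ n) (t : ℝ) (h1 : (2:ℝ)^(n^2) ≤ t) (h2 : t ≤ (2:ℝ)^((n+1)^2)) :
    2^(n+1) - 3 ≤ zG t ∧ zG t ≤ 2^(n+1) + t * (2^(n+1) / 2^((n+1)^2)) := by
  obtain ⟨m, rfl⟩ := Nat.exists_eq_add_of_le' hn
  rw [z_G_step _ t h1 h2, z_G_val]
  have p : (0:ℝ) < (2^(m+1+1) / 2^((m+1+1)^2)) := by positivity
  have q : (0:ℝ) < 2 / 2^(m+1) := by positivity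
  have q2 : (2:ℝ) / 2^(m+1) ≤ 1 := by
    rw [div_le_one (by positivity)]
    exact le_self_pow₀ (by norm_num) (by omega)
  constructor
  · have := mul_nonneg (sub_nonneg.2 h1) p.le
    linarith
  · have : (0:ℝ) ≤ 2^((m+1)^2) * (2^(m+1+1) / 2^((m+1+1)^2)) := by positivity
    rw [sub_mul]
    linarith

noncomputable def zu (s : ℝ) : ℝ := Real.sqrt (Real.logb 2 s)

lemma z_logb_ge (n : ℕ) (s : ℝ) (h : (2:ℝ)^(n^2) ≤ s) : (n:ℝ)^2 ≤ Real.logb 2 s := by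
  rw [Real.le_logb_iff_rpow_le (by norm_num) (lt_of_lt_of_le (by positivity) h)]
  exact_mod_cast h

lemma z_u_pow (n : ℕ) : zu (2^(n^2)) = n := by
  unfold zu
  rw [Real.logb_pow, Real.logb_self_eq_one (by norm_num)]
  push_cast
  rw [mul_one, Real.sqrt_sq (by positivity)]

lemma z_u_ge (n : ℕ) (s : ℝ) (h : (2:ℝ)^(n^2) ≤ s) : (n:ℝ) ≤ zu s := by
  apply Real.le_sqrt_of_sq_le (z_logb_ge n s h)

lemma z_psi_lower (n : ℕ) (s : ℝ) (h : (2:ℝ)^(n^2) ≤ s) :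
    2 ^ zu s * (1 - 1 / 2^n) ≤ psi0 s := by
  have hs : (0:ℝ) < s := lt_of_lt_of_le (by positivity) h
  have h1 : (2:ℝ) ^ zu s ≤ 2 ^ Real.sqrt (Real.logb 2 (1+s)) := by
    apply Real.rpow_le_rpow_of_exponent_le (by norm_num)
    apply Real.sqrt_le_sqrt
    exact Real.logb_le_logb_of_le (by norm_num) hs (by linarith)
  have h2 : (2:ℝ)^n ≤ 2 ^ zu s := by
    rw [← Real.rpow_natCast]
    exact Real.rpow_le_rpow_of_exponent_le (by norm_num) (z_u_ge n s h)
  have h3 : 1 ≤ (2:ℝ)^zu s * (1 / 2^n) := by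
    rw [mul_one_div, le_div_iff₀ (by positivity)]; linarith
  unfold psi0
  linarith

lemma z_psi_upper (s : ℝ) (h : 2 ≤ s) : psi0 s ≤ 2 ^ zu s := by
  have hs : (0:ℝ) < s := by linarith
  set y := Real.logb 2 s with hy
  have y1 : 1 ≤ y := by
    rw [hy, Real.le_logb_iff_rpow_le (by norm_num) hs]; simpa using h
  have hu1 : 1 ≤ zu s := Real.le_sqrt_of_sq_le (by simpa using y1)
  have hu2 : zu s ^ 2 = y := Real.sq_sqrt (by linarith)
  set d := Real.logb 2 (1 + 1/s) with hd
  have d0 : 0 ≤ d := Real.logb_nonneg (by norm_num) (by have : 0 < 1/s := by positivity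
                                                        linarith)
  have e : Real.logb 2 (1+s) = y + d := by
    rw [hy, hd, ← Real.logb_mul (by positivity) (by positivity)]
    congr 1; field_simp; ring
  have h1 : Real.sqrt (Real.logb 2 (1+s)) ≤ zu s + d := by
    rw [e]
    apply Real.sqrt_le_iff.2
    constructor
    · linarith
    · nlinarith
  have h2 : (2:ℝ) ^ Real.sqrt (Real.logb 2 (1+s)) ≤ 2 ^ zu s * (1+1/s) := by
    calc _ ≤ (2:ℝ)^(zu s + d) := Real.rpow_le_rpow_of_exponent_le (by norm_num) h1
      _ = _ := by
        rw [Real.rpow_add (by norm_num), hd, Real.rpow_logb (by norm_num) (by norm_num) (by positivity)]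
  have h3 : (2:ℝ)^zu s ≤ s := by
    calc _ ≤ (2:ℝ)^y := Real.rpow_le_rpow_of_exponent_le (by norm_num) (by nlinarith)
      _ = s := Real.rpow_logb (by norm_num) (by norm_num) hs
  have h4 : (2:ℝ)^zu s * (1/s) ≤ 1 := by
    rw [mul_one_div, div_le_one hs]; exact h3
  unfold psi0
  linarith

lemma z_psi_pos (s : ℝ) (h : 0 < s) : 0 < psi0 s := by
  unfold psi0
  have : 0 < Real.sqrt (Real.logb 2 (1+s)) := Real.sqrt_pos.2 (Real.logb_pos (by norm_num) (by linarith))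
  have := Real.one_lt_rpow (by norm_num : (1:ℝ) < 2) this
  linarith

lemma z_aG (s : ℝ) : aG s = zG s / psi0 s := rfl

lemma z_aG_cont : ContinuousOn aG (Ici 1) := by
  have h1 : Continuous zG := intervalIntegral.continuous_primitive z_g0_int 0
  have h2 : ContinuousOn psi0 (Ici 1) := by
    intro s hs
    have hs : (1:ℝ) ≤ s := hs
    apply ContinuousAt.continuousWithinAt
    unfold psi0 Real.logb
    have : (1:ℝ) + s ≠ 0 := by linarith
    have : Real.log 2 ≠ 0 := by positivity
    have : (2:ℝ) ≠ 0 := by norm_num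
    fun_prop (disch := first | assumption | (left; assumption))
  exact h1.continuousOn.div h2 (fun s hs => (z_psi_pos s (lt_of_lt_of_le one_pos hs)).ne')

lemma z_aG_nonneg (s : ℝ) (h : 0 < s) : 0 ≤ aG s :=
  div_nonneg (intervalIntegral.integral_nonneg h.le (fun t _ => z_g0_nonneg t)) (z_psi_pos s h).le

lemma z_f_int (a b : ℝ) (ha : 1 ≤ a) (hb : 1 ≤ b) : IntervalIntegrable (fun s => aG s / s) volume a b := by
  apply ContinuousOn.intervalIntegrable
  have : uIcc a b ⊆ Ici 1 := fun x hx => (le_min ha hb).trans hx.1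
  refine ((z_aG_cont.mono this).div continuousOn_id ?_)
  intro x hx
  have : (1:ℝ) ≤ x := this hx
  simp; linarith

noncomputable def zF (t : ℝ) : ℝ := ∫ s in (1:ℝ)..t, aG s / s

lemma z_F_sub (a b : ℝ) (ha : 1 ≤ a) (hb : 1 ≤ b) : zF b - zF a = ∫ s in a..b, aG s / s := by
  unfold zF
  rw [intervalIntegral.integral_interval_sub_left (z_f_int _ _ le_rfl hb) (z_f_int _ _ le_rfl ha)]

lemma z_F_mono (a b : ℝ) (ha : 1 ≤ a) (hb : a ≤ b) : zF a ≤ zF b := by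
  rw [← sub_nonneg, z_F_sub a b ha (ha.trans hb)]
  apply intervalIntegral.integral_nonneg hb
  intro s hs
  have : 0 < s := by linarith [hs.1]
  exact div_nonneg (z_aG_nonneg s this) this.le

noncomputable def zH (s : ℝ) : ℝ := -2 * (zu s + 1 / Real.log 2) * 2 ^ (- zu s)

lemma z_H_deriv (s : ℝ) (h : 1 < s) : HasDerivAt zH (2 ^ (-zu s) / s) s := by
  have hs : 0 < s := by linarith
  have L : 0 < Real.log 2 := Real.log_pos (by norm_num)
  have hy : 0 < Real.logb 2 s := Real.logb_pos (by norm_num) h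
  have hu : 0 < zu s := Real.sqrt_pos.2 hy
  have h1 : HasDerivAt (Real.logb 2) (s⁻¹ / Real.log 2) s := (Real.hasDerivAt_log hs.ne').div_const _
  have h2 : HasDerivAt zu (s⁻¹ / Real.log 2 / (2 * zu s)) s := h1.sqrt hy.ne'
  have h3 := (h2.neg).const_rpow (a := 2) (by norm_num)
  have h4 := ((h2.add_const (1 / Real.log 2)).const_mul (-2)).mul h3
  refine h4.congr_deriv ?_
  simp only [Pi.neg_apply]
  field_simp
  ring

lemma z_I (n : ℕ) (hn : 1 ≤ n) : IntervalIntegrable (fun s => 2 ^ (-zu s) / s) volume (2^(n^2)) (2^((n+1)^2)) ∧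
    ∫ s in ((2:ℝ)^(n^2))..(2^((n+1)^2)), 2 ^ (-zu s) / s = (n - 1 + 1 / Real.log 2) / 2^n := by
  have h : (2:ℝ)^(n^2) ≤ 2^((n+1)^2) := pow_le_pow_right₀ (by norm_num) (by gcongr; omega)
  have h0 : (1:ℝ) < 2^(n^2) := one_lt_pow₀ (by norm_num) (by positivity)
  have hd : ∀ x ∈ uIcc ((2:ℝ)^(n^2)) (2^((n+1)^2)), HasDerivAt zH (2 ^ (-zu x) / x) x := by
    intro x hx
    rw [uIcc_of_le h] at hx
    exact z_H_deriv x (h0.trans_le hx.1)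
  have hi : IntervalIntegrable (fun s => (2:ℝ) ^ (-zu s) / s) volume (2^(n^2)) (2^((n+1)^2)) := by
    apply ContinuousOn.intervalIntegrable
    intro x hx
    rw [uIcc_of_le h] at hx
    apply ContinuousAt.continuousWithinAt
    have hx0 : x ≠ 0 := by linarith [hx.1]
    have : Real.log 2 ≠ 0 := by positivity
    have : (2:ℝ) ≠ 0 := by norm_num
    unfold zu Real.logb
    fun_prop (disch := first | assumption | (left; assumption))
  refine ⟨hi, ?_⟩
  rw [intervalIntegral.integral_eq_sub_of_hasDerivAt hd hi]
  unfold zH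
  rw [z_u_pow, z_u_pow, Real.rpow_neg (by norm_num), Real.rpow_neg (by norm_num), Real.rpow_natCast, Real.rpow_natCast, pow_succ]
  have L : 0 < Real.log 2 := Real.log_pos (by norm_num)
  have : (0:ℝ) < 2^n := by positivity
  push_cast
  field_simp
  ring

lemma z_D (n : ℕ) (hn : 1 ≤ n) :
    |zF (2^((n+1)^2)) - zF (2^(n^2)) - (2 * n + 1)| ≤ 20 := by
  have h : (2:ℝ)^(n^2) ≤ 2^((n+1)^2) := pow_le_pow_right₀ (by norm_num) (by gcongr; omega)
  have h0 : (1:ℝ) < 2^(n^2) := one_lt_pow₀ (by norm_num) (by positivity)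
  have h02 : (2:ℝ) ≤ 2^(n^2) := le_self_pow₀ (by norm_num) (by positivity)
  rw [z_F_sub _ _ h0.le (h0.le.trans h)]
  obtain ⟨hi, hI⟩ := z_I n hn
  have hfi := z_f_int _ _ h0.le (h0.le.trans h)
  set J := ∫ s in ((2:ℝ)^(n^2))..(2^((n+1)^2)), aG s / s with hJ
  have L1 : 1 / Real.log 2 ≤ 3/2 := by
    rw [div_le_iff₀ (Real.log_pos (by norm_num))]; linarith [Real.log_two_gt_d9]
  have L2 : 1 ≤ 1 / Real.log 2 := by
    rw [le_div_iff₀ (Real.log_pos (by norm_num))]; linarith [Real.log_two_lt_d9]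
  have hn1 : (1:ℝ) ≤ n := by exact_mod_cast hn
  have p2 : (2:ℝ) ≤ 2^n := le_self_pow₀ (by norm_num) (by omega)
  have pn : (n:ℝ) ≤ 2^n := by exact_mod_cast (Nat.lt_two_pow_self (n := n)).le
  have hlow : (2^(n+1) - 3) * ((n - 1 + 1 / Real.log 2) / 2^n) ≤ J := by
    rw [← hI, ← intervalIntegral.integral_const_mul]
    apply intervalIntegral.integral_mono_on h (hi.const_mul _) hfi
    intro s hs
    have hs0 : 0 < s := by linarith [hs.1]
    have b1 := (z_G_bounds n hn s hs.1 hs.2).1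
    have b2 := z_psi_upper s (h02.trans hs.1)
    have b3 := z_psi_pos s hs0
    rw [z_aG, Real.rpow_neg (by norm_num), ← mul_div_assoc, ← div_eq_mul_inv]
    have c : (0:ℝ) ≤ 2^(n+1) - 3 := by rw [pow_succ]; linarith
    have c' := c.trans b1
    gcongr
  have hup : J ≤ (2^(n+1) * ((n - 1 + 1 / Real.log 2) / 2^n) + 2) / (1 - 1/2^n) := by
    have e2 : ∫ s in ((2:ℝ)^(n^2))..(2^((n+1)^2)), (2^(n+1) * (2 ^ (-zu s) / s) + 2 / 2^((n+1)^2)) / (1 - 1/2^n)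
        ≤ (2^(n+1) * ((n - 1 + 1 / Real.log 2) / 2^n) + 2) / (1 - 1/2^n) := by
      rw [intervalIntegral.integral_div, intervalIntegral.integral_add (hi.const_mul _) (by simp),
        intervalIntegral.integral_const_mul, hI, intervalIntegral.integral_const, smul_eq_mul]
      have : (0:ℝ) ≤ 1 - 1/2^n := by
        rw [sub_nonneg, div_le_one (by positivity)]; linarith
      gcongr
      rw [← mul_div_assoc, div_le_iff₀ (by positivity)]
      linarith
    refine le_trans ?_ e2
    apply intervalIntegral.integral_mono_on h hfi (((hi.const_mul _).add (by simp)).div_const _)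
    intro s hs
    have hs0 : 0 < s := by linarith [hs.1]
    have b1 := (z_G_bounds n hn s hs.1 hs.2).2
    have b2 := z_psi_lower n s hs.1
    have b3 : (2:ℝ)^n ≤ 2 ^ zu s := by
      rw [← Real.rpow_natCast]
      exact Real.rpow_le_rpow_of_exponent_le (by norm_num) (z_u_ge n s hs.1)
    have c : (0:ℝ) < 1 - 1/2^n := by
      rw [sub_pos, div_lt_one (by positivity)]; linarith
    have c2 : (0:ℝ) < 2 ^ zu s := by positivity
    calc aG s / s ≤ (2^(n+1) + s * (2^(n+1) / 2^((n+1)^2))) / (2 ^ zu s * (1 - 1 / 2^n)) / s := by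
          rw [z_aG]; gcongr
      _ = (2^(n+1) * ((2 ^ zu s)⁻¹ / s) + 2^(n+1) / 2^zu s / 2^((n+1)^2)) / (1 - 1 / 2^n) := by
          field_simp
      _ ≤ _ := by
          rw [Real.rpow_neg (by norm_num)]
          gcongr
          rw [div_le_iff₀ c2, pow_succ]
          linarith
  have q : (0:ℝ) < 1/2^n := by positivity
  have q2 : (1:ℝ)/2^n ≤ 1/2 := by gcongr
  have q3 : (n:ℝ) * (1/2^n) ≤ 1 := by rw [mul_one_div, div_le_one (by positivity)]; exact pn
  have e1 : ((2:ℝ)^(n+1) - 3) * ((n - 1 + 1 / Real.log 2) / 2^n) = (2 - 3 * (1/2^n)) * (n - 1 + 1 / Real.log 2) := by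
    rw [pow_succ]; field_simp
  have e2 : (2:ℝ)^(n+1) * ((n - 1 + 1 / Real.log 2) / 2^n) = 2 * (n - 1 + 1 / Real.log 2) := by
    rw [pow_succ]; field_simp
  rw [e1] at hlow
  rw [e2, le_div_iff₀ (by linarith)] at hup
  generalize (1:ℝ)/2^n = r at *
  generalize 1 / Real.log 2 = l at *
  rw [abs_le]
  constructor
  · nlinarith
  · nlinarith

lemma z_S : ∃ K : ℝ, 0 ≤ K ∧ ∀ n : ℕ, |zF (2^(n^2)) - n^2| ≤ K * (n + 1) := by
  refine ⟨20 + |zF (2^(0^2)) - (0:ℕ)^2| + |zF (2^(1^2)) - (1:ℕ)^2|, by positivity, ?_⟩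
  have a0 := abs_nonneg (zF (2^(0^2)) - ((0:ℕ):ℝ)^2)
  have a1 := abs_nonneg (zF (2^(1^2)) - ((1:ℕ):ℝ)^2)
  set A := |zF (2^(0^2)) - ((0:ℕ):ℝ)^2| with hA
  set B := |zF (2^(1^2)) - ((1:ℕ):ℝ)^2| with hB
  intro n
  rcases n with _ | n
  · rw [← hA]; push_cast; linarith
  induction n with
  | zero => rw [← hB]; push_cast; linarith
  | succ n ih =>
    have := z_D (n+1) (by omega)
    rw [abs_le] at *
    push_cast at *
    constructor <;> nlinarith

lemma z_main : ∃ K : ℝ, ∀ t : ℝ, 2 ≤ t → |zF t - (zu t)^2| ≤ K * zu t := by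
  obtain ⟨K, hK, h⟩ := z_S
  refine ⟨3 * K + 3, ?_⟩
  intro t ht
  have ht0 : 0 < t := by linarith
  set u := zu t with hu
  have hu1 : 1 ≤ u := by simpa using z_u_ge 1 t (by simpa using ht)
  have hu2 : u^2 = Real.logb 2 t := Real.sq_sqrt (Real.logb_nonneg (by norm_num) (by linarith))
  have n1 : (⌊u⌋₊ : ℝ) ≤ u := Nat.floor_le (by linarith)
  have n2 : u < (⌊u⌋₊ : ℝ) + 1 := Nat.lt_floor_add_one u
  generalize ⌊u⌋₊ = n at *
  have hn0 : (0:ℝ) ≤ n := by positivity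
  have t1 : (2:ℝ)^(n^2) ≤ t := by
    have : ((n^2:ℕ):ℝ) ≤ Real.logb 2 t := by rw [← hu2]; push_cast; gcongr
    rw [Real.le_logb_iff_rpow_le (by norm_num) ht0, Real.rpow_natCast] at this
    exact this
  have t2 : t ≤ (2:ℝ)^((n+1)^2) := by
    have : Real.logb 2 t ≤ (((n+1)^2:ℕ):ℝ) := by rw [← hu2]; push_cast; gcongr
    rw [Real.logb_le_iff_le_rpow (by norm_num) ht0, Real.rpow_natCast] at this
    exact this
  have m1 := z_F_mono _ _ (one_le_pow₀ (by norm_num)) t1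
  have m2 := z_F_mono _ _ (by linarith) t2
  have s1 := abs_le.1 (h n)
  have s2 := abs_le.1 (h (n+1))
  push_cast at s2
  rw [abs_le]
  constructor
  · have : K * (n+1) ≤ K * (2 * u) := by gcongr; linarith
    nlinarith
  · have : K * (n+1+1) ≤ K * (3 * u) := by gcongr; linarith
    nlinarith

lemma z_tendsto : Filter.Tendsto (MopO aG) Filter.atTop (nhds (1 / Real.log 2)) := by
  obtain ⟨K, hK⟩ := z_main
  have L : 0 < Real.log 2 := Real.log_pos (by norm_num)
  have hu : Tendsto zu atTop atTop := Real.tendsto_sqrt_atTop.comp (Real.tendsto_logb_atTop (by norm_num))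
  have h0 : Tendsto (fun t => K / zu t / Real.log 2) atTop (nhds 0) := by
    simpa using (hu.const_div_atTop K).div_const (Real.log 2)
  rw [tendsto_iff_norm_sub_tendsto_zero]
  refine squeeze_zero' (Eventually.of_forall fun _ => norm_nonneg _) ?_ h0
  filter_upwards [eventually_ge_atTop 2] with t ht
  have hu1 : 1 ≤ zu t := by simpa using z_u_ge 1 t (by simpa using ht)
  have hu2 : zu t^2 = Real.logb 2 t := Real.sq_sqrt (Real.logb_nonneg (by norm_num) (by linarith))
  have hl : Real.log t = zu t^2 * Real.log 2 := by
    rw [hu2, Real.logb]; field_simp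
  have e : MopO aG t - 1 / Real.log 2 = (zF t - zu t^2) / (zu t^2 * Real.log 2) := by
    unfold MopO
    rw [if_pos (by linarith), hl]
    change zF t / _ - _ = _
    have : zu t ≠ 0 := by linarith
    field_simp
  rw [e, Real.norm_eq_abs, abs_div, abs_of_pos (by positivity : 0 < zu t^2 * Real.log 2), div_div,
    div_le_div_iff₀ (by positivity) (by positivity)]
  have := mul_le_mul_of_nonneg_right (hK t ht) (by positivity : 0 ≤ zu t * Real.log 2)
  linarith

lemma z_meas : Measurable (MopO aG) := by
  have hm : Monotone (fun t => zF (max 1 t)) := by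
    intro a b hab
    exact z_F_mono _ _ (le_max_left _ _) (max_le_max le_rfl hab)
  have e : MopO aG = fun t => if t ∈ Ioi (1:ℝ) then zF (max 1 t) / Real.log t else 0 := by
    funext t
    unfold MopO
    by_cases h : 1 < t
    · simp only [mem_Ioi, h, if_true, max_eq_right h.le]; rfl
    · simp [h]
  rw [e]
  exact Measurable.ite measurableSet_Ioi (hm.measurable.div Real.measurable_log) measurable_const

lemma z_bdd : BddPos (MopO aG) := by
  have h1 : ∀ᶠ t in atTop, |MopO aG t| < 1 / Real.log 2 + 1 := by
    have := z_tendsto.abs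
    rw [abs_of_nonneg (by positivity : 0 ≤ 1 / Real.log 2)] at this
    exact this.eventually_lt_const (by linarith)
  obtain ⟨T, hT⟩ := eventually_atTop.1 h1
  obtain ⟨C, hC⟩ := (isCompact_Icc (a := (1:ℝ)) (b := T)).exists_bound_of_continuousOn
    (z_aG_cont.mono (fun x hx => hx.1))
  refine ⟨max (max C 0) (1 / Real.log 2 + 1), ?_⟩
  intro t _
  rcases le_total T t with h | h
  · exact (hT t h).le.trans (le_max_right _ _)
  · refine le_trans ?_ (le_max_left _ _)
    unfold MopO
    split_ifs with ht
    · have l : 0 < Real.log t := Real.log_pos ht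
      have i1 : IntervalIntegrable (fun s : ℝ => C * s⁻¹) volume 1 t := by
        apply IntervalIntegrable.const_mul
        apply intervalIntegral.intervalIntegrable_inv
        · intro x hx
          rw [uIcc_of_le ht.le] at hx
          linarith [hx.1]
        · exact continuousOn_id
      have : |zF t| ≤ C * Real.log t := by
        have := intervalIntegral.norm_integral_le_of_norm_le (f := fun s => aG s / s) (g := fun s => C * s⁻¹) (μ := volume) ht.le ?_ i1
        · rw [intervalIntegral.integral_const_mul, integral_inv_of_pos one_pos (by linarith), div_one] at this
          exact this
        · refine Eventually.of_forall fun s hs => ?_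
          have hs0 : 0 < s := by linarith [hs.1]
          rw [norm_div, Real.norm_eq_abs s, abs_of_pos hs0, div_eq_mul_inv]
          gcongr
          exact hC s ⟨hs.1.le, hs.2.trans h⟩
      rw [abs_div, abs_of_pos l, div_le_iff₀ l]
      refine le_trans this ?_
      gcongr
      exact le_max_left _ _
    · simp

/-- `lim_{t→∞} (M a(·,g0))(t) = 1/log 2`; consequently every generalized limit of
the form `ω = γ ∘ M` satisfies `ω(a(·,g0)) = 1/log 2` (Connes–Dixmier measurability). -/
theorem Mop_avA_g0_tendsto_and_connes_dixmier :
    Filter.Tendsto (MopO aG) Filter.atTop (nhds (1 / Real.log 2)) ∧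
    ∀ γ : (ℝ → ℝ) → ℝ, IsGenLim γ → γ (MopO aG) = 1 / Real.log 2 := by
  refine ⟨z_tendsto, fun γ hγ => ?_⟩
  obtain ⟨h1, h2⟩ := hγ.2.2 _ z_meas z_bdd
  rw [z_tendsto.liminf_eq] at h1
  rw [z_tendsto.limsup_eq] at h2
  exact le_antisymm h2 h1
end
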